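/- Let S = ⟨S, δ, L⟩ and S' = ⟨S', δ', L'⟩ be fuzzy labeled transition systems that are witnessed w.r.t. f∃ΔPDL, and let Z be a crisp simulation between S and S'. Then for every formula φ of f∃ΔPDL and all states x ∈ S, x' ∈ S', if Z(x,x') holds then φ^S(x) ≤ φ^S'(x'). -/

import Mathlib

/-!
A program value `⟦α⟧ x y` need not be matched by a single value `⟦α⟧ x' y'` with `Z y y'`, but it is
always bounded by the supremum of these values. In this form the transfer property is stable under
composition and iteration, because a left-continuous t-norm distributes over suprema, and it
suffices for the diamond clause.
-/

open unitInterval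

noncomputable section
attribute [local instance] Classical.propDecidable

instance : Fact ((0:ℝ) ≤ 1) := ⟨zero_le_one⟩

/-- A left-continuous t-norm on the unit interval `[0,1]`: a commutative, associative
binary operation with neutral element `1`, increasing in both arguments, that
distributes over suprema of nonempty sets (left-continuity). -/
structure Tnorm where
  mul : I → I → I
  mul_comm : ∀ x y, mul x y = mul y x
  mul_assoc : ∀ x y z, mul (mul x y) z = mul x (mul y z)
  mul_one : ∀ x, mul x 1 = x
  mul_le_mul : ∀ {a b c d : I}, a ≤ b → c ≤ d → mul a c ≤ mul b d
  left_continuous : ∀ (x : I) (s : Set I), s.Nonempty → mul x (sSup s) = sSup (mul x '' s)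

/-- The residuum of a t-norm: `(x ⇒ y) = sup {z | z ⊗ x ≤ y}`. -/
def Tnorm.res (T : Tnorm) (x y : I) : I := sSup {z : I | T.mul z x ≤ y}

/-- A fuzzy labeled transition system over actions `A`, propositions `P`, states `St`. -/
structure FLTS (A P St : Type) where
  delta : St → A → St → I
  label : St → P → I

/-- A crisp simulation between two FLTSs. -/
def IsSimulation {A P S S' : Type} (M : FLTS A P S) (M' : FLTS A P S')
    (Z : S → S' → Prop) : Prop :=
  (∀ x x', Z x x' → ∀ p, M.label x p ≤ M'.label x' p) ∧
  (∀ x y x' (ρ : A), Z x x' → 0 < M.delta x ρ y →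
    ∃ y', M.delta x ρ y ≤ M'.delta x' ρ y' ∧ Z y y')
mutual
/-- Formulas of f∃ΔPDL. -/
inductive EForm (A P : Type) : Type
  | const : I → EForm A P
  | prop : P → EForm A P
  | baaz : EForm A P → EForm A P
  | and : EForm A P → EForm A P → EForm A P
  | or : EForm A P → EForm A P → EForm A P
  | impl : I → EForm A P → EForm A P
  | dia : EProg A P → EForm A P → EForm A P
/-- Programs of f∃ΔPDL. -/
inductive EProg (A P : Type) : Type
  | act : A → EProg A P
  | comp : EProg A P → EProg A P → EProg A P
  | union : EProg A P → EProg A P → EProg A P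
  | star : EProg A P → EProg A P
  | test : EForm A P → EProg A P
end

/-- The ⊗-product of the values of `r` along the path `x :: l`. -/
def chainProd (T : Tnorm) {St : Type} (r : St → St → I) : St → List St → I
  | _, [] => 1
  | x, y :: l => T.mul (r x y) (chainProd T r y l)

mutual
/-- Semantics of f∃ΔPDL formulas. -/
def eformSem (T : Tnorm) {A P St : Type} (M : FLTS A P St) : EForm A P → St → I
  | .const a, _ => a
  | .prop p, x => M.label x p
  | .baaz φ, x => if eformSem T M φ x = 1 then 1 else 0
  | .and φ ψ, x => min (eformSem T M φ x) (eformSem T M ψ x)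
  | .or φ ψ, x => max (eformSem T M φ x) (eformSem T M ψ x)
  | .impl a φ, x => T.res a (eformSem T M φ x)
  | .dia α φ, x => ⨆ y, T.mul (eprogSem T M α x y) (eformSem T M φ y)
/-- Semantics of f∃ΔPDL programs. -/
def eprogSem (T : Tnorm) {A P St : Type} (M : FLTS A P St) : EProg A P → St → St → I
  | .act ρ, x, y => M.delta x ρ y
  | .comp α β, x, y => ⨆ z, T.mul (eprogSem T M α x z) (eprogSem T M β z y)
  | .union α β, x, y => max (eprogSem T M α x y) (eprogSem T M β x y)
  | .star α, x, y =>
      sSup {v : I | ∃ l : List St, l.getLastD x = y ∧ v = chainProd T (eprogSem T M α) x l}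
  | .test φ, x, y => if x = y then eformSem T M φ x else 0
end

/-- An FLTS is witnessed w.r.t. f∃ΔPDL: every supremum occurring in the semantic
clauses (for `⟨α⟩φ`, `α∘β` and `α*`) is attained by a greatest element. -/
def WitnessedE (T : Tnorm) {A P St : Type} (M : FLTS A P St) : Prop :=
  (∀ (α : EProg A P) (φ : EForm A P) (x : St), ∃ y : St, ∀ z : St,
      T.mul (eprogSem T M α x z) (eformSem T M φ z) ≤
        T.mul (eprogSem T M α x y) (eformSem T M φ y)) ∧
  (∀ (α β : EProg A P) (x y : St), ∃ z : St, ∀ w : St,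
      T.mul (eprogSem T M α x w) (eprogSem T M β w y) ≤
        T.mul (eprogSem T M α x z) (eprogSem T M β z y)) ∧
  (∀ (α : EProg A P) (x y : St), ∃ l : List St, l.getLastD x = y ∧
      ∀ l' : List St, l'.getLastD x = y →
        chainProd T (eprogSem T M α) x l' ≤ chainProd T (eprogSem T M α) x l)

namespace Tnorm

variable (T : Tnorm)

theorem mul_zero (x : I) : T.mul x 0 = 0 :=
  le_antisymm (by simpa only [T.mul_comm 1, T.mul_one] using T.mul_le_mul (le_one' (t := x)) le_rfl)
    nonneg'

theorem mul_iSup {ι : Sort*} (x : I) (f : ι → I) : T.mul x (⨆ i, f i) = ⨆ i, T.mul x (f i) := by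
  cases isEmpty_or_nonempty ι
  · simp only [iSup_of_empty]
    exact T.mul_zero x
  · rw [iSup, T.left_continuous x _ (Set.range_nonempty f), ← Set.range_comp]
    rfl

theorem mul_le_of_le_biSup_right {ι : Sort*} {p : ι → Prop} {f : ι → I} {a b c : I}
    (hb : b ≤ ⨆ (i) (_ : p i), f i) (h : ∀ i, p i → T.mul a (f i) ≤ c) : T.mul a b ≤ c :=
  calc T.mul a b ≤ T.mul a (⨆ (i) (_ : p i), f i) := T.mul_le_mul le_rfl hb
    _ = ⨆ (i) (_ : p i), T.mul a (f i) := by simp only [T.mul_iSup]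
    _ ≤ c := iSup₂_le h

theorem mul_le_of_le_biSup_left {ι : Sort*} {p : ι → Prop} {f : ι → I} {a b c : I}
    (ha : a ≤ ⨆ (i) (_ : p i), f i) (h : ∀ i, p i → T.mul (f i) b ≤ c) : T.mul a b ≤ c := by
  rw [T.mul_comm]
  exact T.mul_le_of_le_biSup_right ha fun i hi => T.mul_comm b (f i) ▸ h i hi

theorem res_mono_right (a : I) {b c : I} (h : b ≤ c) : T.res a b ≤ T.res a c :=
  sSup_le_sSup fun _ hz => le_trans hz h

/-- The sup-⊗ composition of two fuzzy relations, which interprets `α ∘ β`. -/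
def relComp {St : Type*} (r s : St → St → I) (x z : St) : I :=
  ⨆ y, T.mul (r x y) (s y z)

/-- The reflexive-transitive closure of a fuzzy relation, which interprets `α*`. A path from `x` is
encoded by the list of its states after `x`, so its end point is `l.getLastD x`. -/
def relStar {St : Type} (r : St → St → I) (x y : St) : I :=
  sSup {v | ∃ l : List St, l.getLastD x = y ∧ v = chainProd T r x l}

theorem mul_le_relComp {St : Type*} (r s : St → St → I) (x y z : St) :
    T.mul (r x y) (s y z) ≤ T.relComp r s x z :=
  le_iSup (fun y => T.mul (r x y) (s y z)) y

theorem chainProd_le_relStar {St : Type} (r : St → St → I) (x : St) (l : List St) :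
    chainProd T r x l ≤ T.relStar r x (l.getLastD x) :=
  le_sSup ⟨l, rfl, rfl⟩

theorem relStar_le {St : Type} {r : St → St → I} {x y : St} {c : I}
    (h : ∀ l : List St, l.getLastD x = y → chainProd T r x l ≤ c) : T.relStar r x y ≤ c := by
  refine sSup_le ?_
  rintro _ ⟨l, hl, rfl⟩
  exact h l hl

theorem mul_relStar_le_relStar {St : Type} (r : St → St → I) (x y z : St) :
    T.mul (r x y) (T.relStar r y z) ≤ T.relStar r x z := by
  rw [relStar, sSup_eq_iSup]
  refine T.mul_le_of_le_biSup_right le_rfl ?_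
  rintro _ ⟨l, rfl, rfl⟩
  simpa only [chainProd, List.getLastD_cons] using T.chainProd_le_relStar r x (y :: l)

theorem relComp_relStar_le_relStar {St : Type} (r : St → St → I) (x z : St) :
    T.relComp r (T.relStar r) x z ≤ T.relStar r x z :=
  iSup_le fun y => T.mul_relStar_le_relStar r x y z

end Tnorm

/-- `Z` simulates the fuzzy relation `r` by `r'`: a transition from `x` to `y` is bounded by the
transitions from any `Z`-partner of `x` to the `Z`-partners of `y` taken together. Asking for a
supremum rather than for one dominating partner makes this stable under composition. -/
def FuzzySimulates {S S' : Type*} (Z : S → S' → Prop) (r : S → S → I) (r' : S' → S' → I) : Prop :=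
  ∀ ⦃x x'⦄, Z x x' → ∀ y, r x y ≤ ⨆ (y') (_ : Z y y'), r' x' y'

theorem IsSimulation.fuzzySimulates_delta {A P S S' : Type} {M : FLTS A P S} {M' : FLTS A P S'}
    {Z : S → S' → Prop} (hZ : IsSimulation M M' Z) (ρ : A) :
    FuzzySimulates Z (fun x y => M.delta x ρ y) (fun x' y' => M'.delta x' ρ y') := by
  intro x x' hx y
  rcases eq_or_ne (M.delta x ρ y) 0 with h0 | h0
  · exact h0.trans_le nonneg'
  · obtain ⟨y', hle, hy⟩ := hZ.2 x y x' ρ hx (unitInterval.pos_iff_ne_zero.2 h0)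
    exact le_iSup₂_of_le y' hy hle

namespace FuzzySimulates

section

variable {S S' : Type*} {Z : S → S' → Prop} {r s : S → S → I} {r' s' : S' → S' → I}

theorem mono (h : FuzzySimulates Z r r') (hs : ∀ x' y', r' x' y' ≤ s' x' y') :
    FuzzySimulates Z r s' :=
  fun _ x' hx y => (h hx y).trans (iSup₂_mono fun y' _ => hs x' y')

theorem union (hr : FuzzySimulates Z r r') (hs : FuzzySimulates Z s s') :
    FuzzySimulates Z (fun x y => max (r x y) (s x y)) (fun x' y' => max (r' x' y') (s' x' y')) :=
  fun _ _ hx y => max_le (hr.mono (fun _ _ => le_max_left _ _) hx y)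
    (hs.mono (fun _ _ => le_max_right _ _) hx y)

theorem test {f : S → I} {f' : S' → I} (h : ∀ x x', Z x x' → f x ≤ f' x') :
    FuzzySimulates Z (fun x y => if x = y then f x else 0)
      (fun x' y' => if x' = y' then f' x' else 0) := by
  intro x x' hx y
  rcases eq_or_ne x y with rfl | hxy
  · exact le_iSup₂_of_le x' hx (by simpa only [if_true] using h x x' hx)
  · exact (if_neg hxy).trans_le nonneg'

theorem mul_le_relComp (T : Tnorm) {x y z : S} {x' : S'} {b : I} (hr : FuzzySimulates Z r r')
    (hx : Z x x') (hb : ∀ y', Z y y' → b ≤ ⨆ (z') (_ : Z z z'), s' y' z') :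
    T.mul (r x y) b ≤ ⨆ (z') (_ : Z z z'), T.relComp r' s' x' z' :=
  T.mul_le_of_le_biSup_left (hr hx y) fun y' hy =>
    T.mul_le_of_le_biSup_right (hb y' hy) fun z' hz =>
      le_iSup₂_of_le z' hz (T.mul_le_relComp r' s' x' y' z')

theorem relComp (T : Tnorm) (hr : FuzzySimulates Z r r') (hs : FuzzySimulates Z s s') :
    FuzzySimulates Z (T.relComp r s) (T.relComp r' s') :=
  fun _ _ hx z => iSup_le fun _ => hr.mul_le_relComp T hx fun _ hy => hs hy z

theorem iSup_mul_le (T : Tnorm) {f : S → I} {f' : S' → I} {x : S} {x' : S'}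
    (hr : FuzzySimulates Z r r') (hf : ∀ y y', Z y y' → f y ≤ f' y') (hx : Z x x') :
    ⨆ y, T.mul (r x y) (f y) ≤ ⨆ y', T.mul (r' x' y') (f' y') :=
  iSup_le fun y => T.mul_le_of_le_biSup_left (hr hx y) fun y' hy =>
    le_iSup_of_le y' (T.mul_le_mul le_rfl (hf y y' hy))

end

section

variable {S S' : Type} {Z : S → S' → Prop} {r : S → S → I} {r' : S' → S' → I}

theorem chainProd_le (T : Tnorm) (hr : FuzzySimulates Z r r') (l : List S) {x : S} {x' : S'}
    (hx : Z x x') :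
    chainProd T r x l ≤ ⨆ (y') (_ : Z (l.getLastD x) y'), T.relStar r' x' y' := by
  induction l generalizing x x' with
  | nil => exact le_iSup₂_of_le x' hx (T.chainProd_le_relStar r' x' [])
  | cons y l ih =>
    rw [List.getLastD_cons]
    calc chainProd T r x (y :: l)
        ≤ ⨆ (z') (_ : Z (l.getLastD y) z'), T.relComp r' (T.relStar r') x' z' :=
          hr.mul_le_relComp T hx fun _ hy => ih hy
      _ ≤ ⨆ (z') (_ : Z (l.getLastD y) z'), T.relStar r' x' z' :=
          iSup₂_mono fun z' _ => T.relComp_relStar_le_relStar r' x' z'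

theorem relStar (T : Tnorm) (hr : FuzzySimulates Z r r') :
    FuzzySimulates Z (T.relStar r) (T.relStar r') := by
  refine fun _ _ hx _ => T.relStar_le ?_
  rintro l rfl
  exact hr.chainProd_le T l hx

end

end FuzzySimulates

theorem ite_eq_one_mono {a b : I} (h : a ≤ b) :
    (if a = 1 then 1 else 0 : I) ≤ if b = 1 then 1 else 0 := by
  split_ifs with ha hb
  · exact le_rfl
  · exact absurd (le_antisymm le_one' (ha ▸ h)) hb
  · exact nonneg'
  · exact le_rfl

mutual

theorem preservation_simulation_fePDL_general {A P S S' : Type} (T : Tnorm) {M : FLTS A P S}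
    {M' : FLTS A P S'} {Z : S → S' → Prop} (hZ : IsSimulation M M' Z) :
    ∀ (φ : EForm A P) (x : S) (x' : S'), Z x x' → eformSem T M φ x ≤ eformSem T M' φ x'
  | .const a, _, _, _ => by simp only [eformSem, le_refl]
  | .prop p, x, x', hx => by simpa only [eformSem] using hZ.1 x x' hx p
  | .baaz φ, x, x', hx => by
    simpa only [eformSem] using
      ite_eq_one_mono (preservation_simulation_fePDL_general T hZ φ x x' hx)
  | .and φ ψ, x, x', hx => by
    simpa only [eformSem] using
      min_le_min (preservation_simulation_fePDL_general T hZ φ x x' hx)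
        (preservation_simulation_fePDL_general T hZ ψ x x' hx)
  | .or φ ψ, x, x', hx => by
    simpa only [eformSem] using
      max_le_max (preservation_simulation_fePDL_general T hZ φ x x' hx)
        (preservation_simulation_fePDL_general T hZ ψ x x' hx)
  | .impl a φ, x, x', hx => by
    simpa only [eformSem] using
      T.res_mono_right a (preservation_simulation_fePDL_general T hZ φ x x' hx)
  | .dia α φ, _, _, hx => by
    simpa only [eformSem] using
      (hZ.fuzzySimulates_eprogSem T α).iSup_mul_le T
        (preservation_simulation_fePDL_general T hZ φ) hx

theorem IsSimulation.fuzzySimulates_eprogSem {A P S S' : Type} (T : Tnorm) {M : FLTS A P S}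
    {M' : FLTS A P S'} {Z : S → S' → Prop} (hZ : IsSimulation M M' Z) :
    ∀ α : EProg A P, FuzzySimulates Z (eprogSem T M α) (eprogSem T M' α)
  | .act ρ => by
    simpa only [FuzzySimulates, eprogSem] using hZ.fuzzySimulates_delta ρ
  | .comp α β => by
    simpa only [FuzzySimulates, eprogSem, Tnorm.relComp] using
      (hZ.fuzzySimulates_eprogSem T α).relComp T (hZ.fuzzySimulates_eprogSem T β)
  | .union α β => by
    simpa only [FuzzySimulates, eprogSem] using
      (hZ.fuzzySimulates_eprogSem T α).union (hZ.fuzzySimulates_eprogSem T β)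
  | .star α => by
    simpa only [FuzzySimulates, eprogSem, Tnorm.relStar] using
      (hZ.fuzzySimulates_eprogSem T α).relStar T
  | .test φ => by
    simpa only [FuzzySimulates, eprogSem] using
      FuzzySimulates.test (preservation_simulation_fePDL_general T hZ φ)

end

/-- Formulas of f∃ΔPDL are preserved under crisp simulations between witnessed FLTSs. -/
theorem preservation_simulation_fePDL
    {A P S S' : Type} [Nonempty A] [Nonempty P] [Nonempty S] [Nonempty S']
    (T : Tnorm) (M : FLTS A P S) (M' : FLTS A P S')
    (hM : WitnessedE T M) (hM' : WitnessedE T M')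
    (Z : S → S' → Prop) (hZ : IsSimulation M M' Z) :
    ∀ (φ : EForm A P) (x : S) (x' : S'),
      Z x x' → eformSem T M φ x ≤ eformSem T M' φ x' :=
  preservation_simulation_fePDL_general T hZ
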